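/- arXiv:math/0602148 — 5 statements merged into one kernel-verified Lean document; each statement's English description precedes it below -/
import Mathlib

section
/- For every n ≥ 3, the group K_n is not finitely presentable: there is no group isomorphism between K_n and a presented group on a finite generating set with a finite set of relators. -/
open FreeGroup

/-- The free group on `n` generators. -/
abbrev FG (n : ℕ) : Type := FreeGroup (Fin n)

/-- The pure symmetric automorphism group `PΣ_n`: automorphisms sending each
generator to a conjugate of itself. -/
def PSigmaAut (n : ℕ) : Subgroup (MulAut (FG n)) where
  carrier := {φ | ∀ i : Fin n, ∃ w : FG n, φ (of i) = w * of i * w⁻¹}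
  one_mem' := fun i => ⟨1, by simp⟩
  mul_mem' := by
    rintro φ ψ hφ hψ i
    obtain ⟨w, hw⟩ := hψ i
    obtain ⟨v, hv⟩ := hφ i
    refine ⟨φ w * v, ?_⟩
    simp only [MulAut.mul_apply, hw, _root_.map_mul, _root_.map_inv, hv, mul_inv_rev, mul_assoc]
  inv_mem' := by
    intro φ hφ i
    obtain ⟨w, hw⟩ := hφ i
    refine ⟨(φ⁻¹ w)⁻¹, ?_⟩
    refine φ.injective ?_
    simp only [MulAut.apply_inv_self, _root_.map_mul, _root_.map_inv, inv_inv, hw]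
    group

/-- The projection `F_n → F_{n-1}` sending `x_n ↦ 1` and `x_i ↦ x_i` for `i < n-1`. -/
def projHom (n : ℕ) : FG n →* FG (n - 1) :=
  FreeGroup.lift fun i => if h : (i : ℕ) < n - 1 then of (⟨i, h⟩ : Fin (n - 1)) else 1

/-- The inclusion `F_{n-1} → F_n`. -/
def castHom (n : ℕ) : FG (n - 1) →* FG n :=
  FreeGroup.lift fun i => of (Fin.castLE (Nat.sub_le n 1) i)

/-- The endomorphism of `F_{n-1}` induced by an automorphism of `F_n`. -/
def desc (n : ℕ) (φ : MulAut (FG n)) : FG (n - 1) →* FG (n - 1) :=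
  (projHom n).comp ((φ : FG n ≃* FG n).toMonoidHom.comp (castHom n))

lemma desc_proj {n : ℕ} {φ : MulAut (FG n)} (hφ : φ ∈ PSigmaAut n) (x : FG n) :
    desc n φ (projHom n x) = projHom n (φ x) := by
  have : (desc n φ).comp (projHom n) = (projHom n).comp (φ : FG n ≃* FG n).toMonoidHom := by
    apply FreeGroup.ext_hom
    intro i
    by_cases h : (i : ℕ) < n - 1
    · simp only [MonoidHom.comp_apply, projHom, FreeGroup.lift_apply_of, dif_pos h]
      simp only [desc, MonoidHom.comp_apply, castHom, FreeGroup.lift_apply_of]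
      congr 2
    · obtain ⟨w, hw⟩ := hφ i
      simp only [MonoidHom.comp_apply, projHom, FreeGroup.lift_apply_of, dif_neg h,
        MulEquiv.coe_toMonoidHom, hw, _root_.map_mul, _root_.map_inv, _root_.map_one]
      simp
  exact DFunLike.congr_fun this x

lemma desc_mul {n : ℕ} {φ : MulAut (FG n)} (hφ : φ ∈ PSigmaAut n) (ψ : MulAut (FG n)) :
    desc n (φ * ψ) = (desc n φ).comp (desc n ψ) := by
  apply FreeGroup.ext_hom
  intro i
  simp only [desc, MonoidHom.comp_apply, MulEquiv.coe_toMonoidHom, MulAut.mul_apply]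
  exact (desc_proj hφ _).symm

lemma desc_one (n : ℕ) : desc n 1 = MonoidHom.id (FG (n - 1)) := by
  apply FreeGroup.ext_hom
  intro i
  simp only [desc, MonoidHom.comp_apply, MulEquiv.coe_toMonoidHom, MulAut.one_apply,
    castHom, FreeGroup.lift_apply_of, projHom, MonoidHom.id_apply]
  rw [dif_pos (show ((Fin.castLE (Nat.sub_le n 1) i : Fin n) : ℕ) < n - 1 from i.isLt)]
  exact congrArg of (Fin.ext rfl)

/-- The automorphism of `F_{n-1}` induced by an element of `PΣ_n`. -/
def descAut (n : ℕ) (φ : PSigmaAut n) : MulAut (FG (n - 1)) :=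
  MonoidHom.toMulEquiv (desc n ↑φ) (desc n ↑(φ⁻¹))
    (by
      rw [← desc_mul (φ⁻¹).2 ↑φ]
      norm_num [desc_one])
    (by
      rw [← desc_mul φ.2 ↑(φ⁻¹)]
      norm_num [desc_one])

lemma descAut_mem (n : ℕ) (φ : PSigmaAut n) : descAut n φ ∈ PSigmaAut (n - 1) := by
  intro i
  obtain ⟨w, hw⟩ := φ.2 (Fin.castLE (Nat.sub_le n 1) i)
  refine ⟨projHom n w, ?_⟩
  have : descAut n φ (of i) = projHom n ((φ : MulAut (FG n)) (of (Fin.castLE (Nat.sub_le n 1) i))) := by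
    simp only [descAut, MonoidHom.toMulEquiv, MulEquiv.coe_mk, Equiv.coe_fn_mk, desc,
      MonoidHom.comp_apply, MulEquiv.coe_toMonoidHom, castHom, FreeGroup.lift_apply_of]
  rw [this, hw]
  simp only [_root_.map_mul, _root_.map_inv, projHom, FreeGroup.lift_apply_of]
  rw [dif_pos (show ((Fin.castLE (Nat.sub_le n 1) i : Fin n) : ℕ) < n - 1 from i.isLt)]
  congr 2

/-- The homomorphism `π_n : PΣ_n → PΣ_{n-1}` induced by killing the last generator. -/
def piHom (n : ℕ) : PSigmaAut n →* PSigmaAut (n - 1) :=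
  MonoidHom.mk' (fun φ => ⟨descAut n φ, descAut_mem n φ⟩)
    (by
      intro φ ψ
      refine Subtype.ext (MulEquiv.ext fun x => ?_)
      show desc n ↑(φ * ψ) x = (descAut n φ * descAut n ψ) x
      rw [MulAut.mul_apply]
      show _ = desc n ↑φ (desc n ↑ψ x)
      rw [Subgroup.coe_mul, desc_mul φ.2]
      rfl)

/-- The kernel `K_n` of `π_n : PΣ_n → PΣ_{n-1}`. -/
def Kn (n : ℕ) : Subgroup (PSigmaAut n) := (piHom n).ker

/-- The monoid hom underlying `α_{ij}`: sends `x_i ↦ x_j x_i x_j⁻¹` and fixes the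
other generators. -/
def alphaHom (n : ℕ) (i j : Fin n) : FG n →* FG n :=
  FreeGroup.lift fun r => if r = i then of j * of i * (of j)⁻¹ else of r

/-- The inverse of `alphaHom`. -/
def alphaInvHom (n : ℕ) (i j : Fin n) : FG n →* FG n :=
  FreeGroup.lift fun r => if r = i then (of j)⁻¹ * of i * of j else of r

/-- The McCool generator `α_{ij} ∈ Aut(F_n)`, sending `x_i ↦ x_j x_i x_j⁻¹` and fixing
the other generators (defined to be the identity if `i = j`). -/
def alphaAut (n : ℕ) (i j : Fin n) : MulAut (FG n) :=
  if h : i = j then 1 else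
    MonoidHom.toMulEquiv (alphaHom n i j) (alphaInvHom n i j)
      (by
        apply FreeGroup.ext_hom
        intro r
        by_cases hr : r = i
        · subst hr
          simp [alphaHom, alphaInvHom, Ne.symm h, mul_assoc]
        · simp [alphaHom, alphaInvHom, hr])
      (by
        apply FreeGroup.ext_hom
        intro r
        by_cases hr : r = i
        · subst hr
          simp [alphaHom, alphaInvHom, Ne.symm h, mul_assoc]
        · simp [alphaHom, alphaInvHom, hr])

lemma alphaAut_apply_of (n : ℕ) {i j : Fin n} (hij : i ≠ j) (r : Fin n) :
    alphaAut n i j (of r) = if r = i then of j * of i * (of j)⁻¹ else of r := by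
  simp only [alphaAut, dif_neg hij]
  show alphaHom n i j (of r) = _
  simp [alphaHom]

lemma alphaAut_mem (n : ℕ) (i j : Fin n) : alphaAut n i j ∈ PSigmaAut n := by
  by_cases h : i = j
  · simp only [alphaAut, dif_pos h]
    exact (PSigmaAut n).one_mem
  · intro r
    rw [alphaAut_apply_of n h r]
    by_cases hr : r = i
    · subst hr
      exact ⟨of j, by simp⟩
    · exact ⟨1, by simp [hr]⟩

/-- `α_{ij}` as an element of `PΣ_n`. -/
def alphaP (n : ℕ) (i j : Fin n) : PSigmaAut n := ⟨alphaAut n i j, alphaAut_mem n i j⟩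

/-- underlying type of a central extension -/
@[ext] structure CE (K A : Type) where
  g : K
  a : A

/-- the central extension attached to a normalized 2-cocycle -/
@[reducible] def CE.group {K A : Type} [Group K] [AddCommGroup A] (f : K → K → A)
    (h1 : ∀ x, f 1 x = 0) (h2 : ∀ x, f x 1 = 0)
    (hc : ∀ x y z, f (x * y) z + f x y = f x (y * z) + f y z) : Group (CE K A) where
  mul p q := ⟨p.g * q.g, p.a + q.a + f p.g q.g⟩
  one := ⟨1, 0⟩
  inv p := ⟨p.g⁻¹, - p.a - f p.g⁻¹ p.g⟩
  mul_assoc p q r := by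
    refine CE.ext (mul_assoc _ _ _) ?_
    show p.a + q.a + f p.g q.g + r.a + f (p.g * q.g) r.g
      = p.a + (q.a + r.a + f q.g r.g) + f p.g (q.g * r.g)
    have := hc p.g q.g r.g
    rw [← sub_eq_zero] at this ⊢
    rw [← this]; abel
  one_mul p := by
    refine CE.ext (one_mul _) ?_
    show 0 + p.a + f 1 p.g = p.a
    rw [h1]; abel
  mul_one p := by
    refine CE.ext (mul_one _) ?_
    show p.a + 0 + f p.g 1 = p.a
    rw [h2]; abel
  inv_mul_cancel p := by
    refine CE.ext (inv_mul_cancel _) ?_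
    show - p.a - f p.g⁻¹ p.g + p.a + f p.g⁻¹ p.g = 0
    abel

theorem fp_cocycle {K A : Type} [Group K] [AddCommGroup A] (f : K → K → A)
    (h1 : ∀ x, f 1 x = 0) (h2 : ∀ x, f x 1 = 0)
    (hc : ∀ x y z, f (x * y) z + f x y = f x (y * z) + f y z)
    {α : Type} (rels : Set (FreeGroup α)) (hr : rels.Finite)
    (e : K ≃* PresentedGroup rels) :
    ∃ S : Set A, S.Finite ∧ ∀ x y : K, x * y = y * x →
      f x y - f y x ∈ AddSubgroup.closure S := by
  let _ := CE.group f h1 h2 hc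
  have mul_g : ∀ p q : CE K A, (p * q).g = p.g * q.g := fun _ _ => rfl
  have mul_a : ∀ p q : CE K A, (p * q).a = p.a + q.a + f p.g q.g := fun _ _ => rfl
  let κ : FreeGroup α →* K := e.symm.toMonoidHom.comp (PresentedGroup.mk rels)
  let Λ : FreeGroup α →* CE K A := FreeGroup.lift fun a => ⟨κ (of a), 0⟩
  let pr : CE K A →* K := MonoidHom.mk' CE.g mul_g
  have hΛ : ∀ x, (Λ x).g = κ x := by
    have : pr.comp Λ = κ := by
      apply FreeGroup.ext_hom
      intro a
      simp [Λ, pr]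
    intro x
    exact DFunLike.congr_fun this x
  have κsurj : Function.Surjective κ := e.symm.surjective.comp (PresentedGroup.mk_surjective rels)
  have κker : ∀ x, κ x = 1 ↔ x ∈ Subgroup.normalClosure rels := by
    intro x
    rw [← PresentedGroup.mk_eq_one_iff]
    exact e.symm.map_eq_one_iff
  let S : Set A := (fun r => (Λ r).a) '' rels
  let C : Subgroup (CE K A) :=
    { carrier := {p | p.g = 1 ∧ p.a ∈ AddSubgroup.closure S}
      one_mem' := ⟨rfl, zero_mem _⟩
      mul_mem' := by
        rintro p q ⟨hp, hp'⟩ ⟨hq, hq'⟩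
        refine ⟨by rw [mul_g, hp, hq, one_mul], ?_⟩
        rw [mul_a, hp, h1, add_zero]
        exact add_mem hp' hq'
      inv_mem' := by
        rintro p ⟨hp, hp'⟩
        refine ⟨?_, ?_⟩
        · show p.g⁻¹ = 1
          rw [hp, inv_one]
        · show - p.a - f p.g⁻¹ p.g ∈ _
          rw [hp, h2, sub_zero]
          exact neg_mem hp' }
  have hcen : ∀ p q : CE K A, p.g = 1 → p * q = q * p := by
    intro p q hp
    refine CE.ext ?_ ?_
    · rw [mul_g, mul_g, hp, one_mul, mul_one]
    · rw [mul_a, mul_a, hp, h1, h2]; abel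
  have hCn : C.Normal := by
    constructor
    intro p hp q
    rw [← hcen p q hp.1, mul_inv_cancel_right]
    exact hp
  have hle : Subgroup.normalClosure rels ≤ C.comap Λ := by
    have := hCn.comap Λ
    apply Subgroup.normalClosure_le_normal
    intro r hr
    refine ⟨?_, AddSubgroup.subset_closure ⟨r, hr, rfl⟩⟩
    rw [hΛ, κker]
    exact Subgroup.subset_normalClosure hr
  refine ⟨S, hr.image _, ?_⟩
  intro x y hxy
  obtain ⟨u, rfl⟩ := κsurj x
  obtain ⟨v, rfl⟩ := κsurj y
  have hn : u * v * (v * u)⁻¹ ∈ Subgroup.normalClosure rels := by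
    rw [← κker]
    simp [hxy]
  obtain ⟨hs1, hs2⟩ := hle hn
  have key : Λ (u * v) = Λ (u * v * (v * u)⁻¹) * (Λ v * Λ u) := by
    rw [← _root_.map_mul, ← _root_.map_mul, inv_mul_cancel_right]
  have key2 := congrArg CE.a key
  rw [_root_.map_mul, mul_a, mul_a (Λ (u * v * (v * u)⁻¹)), hs1, h1, mul_a, hΛ, hΛ] at key2
  have : f (κ u) (κ v) - f (κ v) (κ u) = (Λ (u * v * (v * u)⁻¹)).a := by
    rw [← sub_eq_zero] at key2 ⊢
    rw [← key2]; abel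
  rw [this]
  exact hs2

theorem comm_gen {ι W : Type} [DecidableEq ι] [Group W] (e : FreeGroup ι →* W) (i : ι)
    (hi : e (of i) = 1) (v : FreeGroup ι) (hv : v * of i = of i * v) : e v = 1 := by
  classical
  let sw : Equiv.Perm (W × Bool) := Equiv.swap (1, false) (1, true)
  let ρ : FreeGroup ι →* Equiv.Perm (W × Bool) := FreeGroup.lift fun j =>
    if j = i then sw else
      (Equiv.mulLeft (e (of j))).prodCongr (Equiv.refl Bool)
  have hsw : ∀ p, (sw p).1 = p.1 := by
    intro p
    simp only [sw, Equiv.swap_apply_def]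
    split_ifs with h h
    · rw [h]
    · rw [h]
    · rfl
  have hρi : ρ (of i) = sw := by simp [ρ]
  have hρ : ∀ v p, (ρ v p).1 = e v * p.1 := by
    have hof : ∀ j p, (ρ (of j) p).1 = e (of j) * p.1 := by
      intro j p
      by_cases h : j = i
      · rw [h, hρi, hsw, hi, one_mul]
      · simp [ρ, h]
    intro v
    induction v using FreeGroup.induction_on with
    | C1 => simp
    | of j => exact hof j
    | inv_of j _ =>
      intro p
      have := hof j ((ρ (of j))⁻¹ p)
      rw [← Equiv.Perm.mul_apply, mul_inv_cancel, Equiv.Perm.one_apply] at this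
      rw [_root_.map_inv, _root_.map_inv, this, inv_mul_cancel_left]
    | mul x y hx hy =>
      intro p
      rw [_root_.map_mul, _root_.map_mul, Equiv.Perm.mul_apply, hx, hy, mul_assoc]
  by_contra hne
  have h := congrArg (fun σ => σ (1, false)) (congrArg ρ hv)
  simp only [_root_.map_mul, Equiv.Perm.mul_apply, hρi] at h
  have h3 : sw (1, false) = (1, true) := by simp [sw]
  have h4 : sw (ρ v (1, false)) = ρ v (1, false) := by
    apply Equiv.swap_apply_of_ne_of_ne
    · intro h; apply hne
      have := hρ v (1, false); rw [h] at this; simpa using this.symm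
    · intro h; apply hne
      have := hρ v (1, false); rw [h] at this; simpa using this.symm
  rw [h3, h4] at h
  simpa using (ρ v).injective h

theorem conj_gen {ι W : Type} [DecidableEq ι] [Group W] (e : FreeGroup ι →* W) (i : ι)
    (hi : e (of i) = 1) (v w : FreeGroup ι) (h : v * of i * v⁻¹ = w * of i * w⁻¹) :
    e v = e w := by
  have : e (w⁻¹ * v) = 1 := by
    apply comm_gen e i hi
    have : v * of i = w * of i * w⁻¹ * v := by rw [← h]; group
    rw [mul_assoc, this]; group
  rw [_root_.map_mul, _root_.map_inv] at this
  exact (inv_mul_eq_one.mp this).symm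

abbrev LR : Type := LaurentPolynomial ℤ

open LaurentPolynomial (T)

/-- the wreath product of two infinite cyclic groups -/
@[ext] structure WW where
  m : LR
  k : ℤ

noncomputable instance : Mul WW := ⟨fun p q => ⟨p.m + T p.k * q.m, p.k + q.k⟩⟩
noncomputable instance : One WW := ⟨⟨0, 0⟩⟩
noncomputable instance : Inv WW := ⟨fun p => ⟨- T (-p.k) * p.m, -p.k⟩⟩

theorem WW.mul_m (p q : WW) : (p * q).m = p.m + T p.k * q.m := rfl
theorem WW.mul_k (p q : WW) : (p * q).k = p.k + q.k := rfl
theorem WW.one_m : (1 : WW).m = 0 := rfl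
theorem WW.one_k : (1 : WW).k = 0 := rfl
theorem WW.inv_m (p : WW) : (p⁻¹).m = - T (-p.k) * p.m := rfl
theorem WW.inv_k (p : WW) : (p⁻¹).k = - p.k := rfl

theorem TT (k : ℤ) : (T k : LR) * T (-k) = 1 := by
  rw [← LaurentPolynomial.T_add]; simp

noncomputable instance : Group WW where
  mul_assoc p q r := by
    ext1
    · simp only [WW.mul_m, WW.mul_k, LaurentPolynomial.T_add]; ring
    · simp only [WW.mul_k]; ring
  one_mul p := by ext1 <;> simp [WW.mul_m, WW.mul_k, WW.one_m, WW.one_k]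
  mul_one p := by ext1 <;> simp [WW.mul_m, WW.mul_k, WW.one_m, WW.one_k]
  inv_mul_cancel p := by
    ext1 <;> simp [WW.mul_m, WW.mul_k, WW.one_m, WW.one_k, WW.inv_m, WW.inv_k]

theorem WW.conj_m (p q : WW) : (p * q * p⁻¹).m = (1 - T q.k) * p.m + T p.k * q.m := by
  simp only [WW.mul_m, WW.mul_k, WW.inv_m, LaurentPolynomial.T_add]
  linear_combination (- T q.k * p.m) * TT p.k
theorem WW.conj_k (p q : WW) : (p * q * p⁻¹).k = q.k := by
  simp only [WW.mul_k, WW.inv_k]; ring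

/-- exponent as a hom -/
noncomputable def WW.kHom : WW →* Multiplicative ℤ :=
  MonoidHom.mk' (fun p => Multiplicative.ofAdd p.k) (fun _ _ => rfl)

/-- the endomorphism of `WW` -/
noncomputable def WW.endo (s : ℤ) (b : LR) : WW →* WW :=
  MonoidHom.mk' (fun p => ⟨T s * p.m + (1 - T p.k) * b, p.k⟩) (by
    intro p q
    ext1
    · simp only [WW.mul_m, WW.mul_k, LaurentPolynomial.T_add]; ring
    · rfl)

theorem T_inj {a b : ℤ} (h : (T a : LR) = T b) : a = b := by
  have := congrArg (fun p : LR => p.coeff a) h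
  simp only [LaurentPolynomial.T_apply] at this
  by_contra hab
  simp [Ne.symm hab] at this

theorem one_sub_T_cancel {p q : LR} (h : (1 - T 1) * p = (1 - T 1) * q) : p = q := by
  have h0 : (1 - T 1 : LR) ≠ 0 := by
    intro h
    have : (T 0 : LR) = T 1 := by rw [LaurentPolynomial.T_zero]; exact sub_eq_zero.mp h
    exact absurd (T_inj this) (by norm_num)
  exact mul_left_cancel₀ h0 h

theorem no_fg (S : Set LR) (hS : S.Finite) : ¬ ∀ k : ℕ, (T k : LR) ∈ AddSubgroup.closure S := by
  intro h
  let U : Set ℤ := ⋃ s ∈ S, (s.coeff.support : Set ℤ)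
  have hU : U.Finite := hS.biUnion fun s _ => Finset.finite_toSet _
  let D : AddSubgroup LR :=
    { carrier := {p | ∀ j ∉ U, p.coeff j = 0}
      zero_mem' := by intro j _; simp
      add_mem' := by
        intro p q hp hq j hj
        have := hp j hj
        have := hq j hj
        simp [*]
      neg_mem' := by
        intro p hp j hj
        have := hp j hj
        simp [*] }
  have hle : AddSubgroup.closure S ≤ D := by
    rw [AddSubgroup.closure_le]
    intro s hs j hj
    by_contra hne
    exact hj (Set.mem_biUnion hs (Finsupp.mem_support_iff.mpr hne))
  have hsub : Set.range (fun k : ℕ => (k : ℤ)) ⊆ U := by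
    rintro _ ⟨k, rfl⟩
    by_contra hk
    have := hle (h k) _ hk
    simp at this
  exact (Set.infinite_range_of_injective Nat.cast_injective) (hU.subset hsub)

section main
variable {n : ℕ}

/-- first index -/
def i0 (hn : 3 ≤ n) : Fin n := ⟨0, by omega⟩
/-- second index -/
def i1 (hn : 3 ≤ n) : Fin n := ⟨1, by omega⟩
/-- last index -/
def il (hn : 3 ≤ n) : Fin n := ⟨n - 1, by omega⟩

theorem i01 (hn : 3 ≤ n) : i0 hn ≠ i1 hn := by simp [i0, i1]
theorem i0l (hn : 3 ≤ n) : i0 hn ≠ il hn := by simp [i0, il]; omega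
theorem i1l (hn : 3 ≤ n) : i1 hn ≠ il hn := by simp [i1, il]; omega

/-- the map to the wreath product -/
noncomputable def ew (hn : 3 ≤ n) : FG n →* WW := FreeGroup.lift fun j =>
  if j = il hn then ⟨1, 0⟩ else if j = i1 hn then ⟨0, 1⟩ else 1

theorem ew_l (hn : 3 ≤ n) : ew hn (of (il hn)) = ⟨1, 0⟩ := by simp [ew]
theorem ew_1 (hn : 3 ≤ n) : ew hn (of (i1 hn)) = ⟨0, 1⟩ := by simp [ew, i1l]
theorem ew_other (hn : 3 ≤ n) (j : Fin n) (h1 : j ≠ i1 hn) (hl : j ≠ il hn) :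
    ew hn (of j) = 1 := by simp [ew, h1, hl]

/-- conjugator -/
noncomputable def cw (φ : PSigmaAut n) (i : Fin n) : FG n := (φ.2 i).choose
theorem cw_spec (φ : PSigmaAut n) (i : Fin n) :
    (φ : MulAut (FG n)) (of i) = cw φ i * of i * (cw φ i)⁻¹ := (φ.2 i).choose_spec

/-- twisting exponent -/
noncomputable def tau (hn : 3 ≤ n) (φ : PSigmaAut n) : ℤ := (ew hn (cw φ (il hn))).k
/-- first crossed homomorphism -/
noncomputable def m1 (hn : 3 ≤ n) (φ : PSigmaAut n) : LR := (ew hn (cw φ (i0 hn))).m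
/-- second crossed homomorphism -/
noncomputable def m2 (hn : 3 ≤ n) (φ : PSigmaAut n) : LR := (ew hn (cw φ (i1 hn))).m

theorem tau_eq (hn : 3 ≤ n) (φ : PSigmaAut n) (w : FG n)
    (h : (φ : MulAut (FG n)) (of (il hn)) = w * of (il hn) * w⁻¹) :
    tau hn φ = (ew hn w).k := by
  rw [cw_spec] at h
  have := congrArg (fun x => (ew hn x).m) h
  simp only [_root_.map_mul, _root_.map_inv, WW.conj_m, ew_l] at this
  simp at this
  exact T_inj this

theorem m1_full (hn : 3 ≤ n) (φ : PSigmaAut n) (w : FG n)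
    (h : (φ : MulAut (FG n)) (of (i0 hn)) = w * of (i0 hn) * w⁻¹) :
    ew hn (cw φ (i0 hn)) = ew hn w := by
  rw [cw_spec] at h
  exact conj_gen _ _ (ew_other hn _ (i01 hn) (i0l hn)) _ _ h

theorem m1_eq (hn : 3 ≤ n) (φ : PSigmaAut n) (w : FG n)
    (h : (φ : MulAut (FG n)) (of (i0 hn)) = w * of (i0 hn) * w⁻¹) :
    m1 hn φ = (ew hn w).m := congrArg WW.m (m1_full hn φ w h)

theorem m2_eq (hn : 3 ≤ n) (φ : PSigmaAut n) (w : FG n)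
    (h : (φ : MulAut (FG n)) (of (i1 hn)) = w * of (i1 hn) * w⁻¹) :
    m2 hn φ = (ew hn w).m := by
  rw [cw_spec] at h
  have := congrArg (fun x => (ew hn x).m) h
  simp only [_root_.map_mul, _root_.map_inv, WW.conj_m, ew_1, mul_zero, add_zero] at this
  exact one_sub_T_cancel this

theorem ew_phi (hn : 3 ≤ n) (φ : PSigmaAut n) (x : FG n) :
    ew hn ((φ : MulAut (FG n)) x) = WW.endo (tau hn φ) (m2 hn φ) (ew hn x) := by
  have : (ew hn).comp (φ : MulAut (FG n)).toMonoidHom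
      = (WW.endo (tau hn φ) (m2 hn φ)).comp (ew hn) := by
    apply FreeGroup.ext_hom
    intro j
    simp only [MonoidHom.comp_apply, MulEquiv.coe_toMonoidHom]
    rw [cw_spec, _root_.map_mul, _root_.map_mul, _root_.map_inv]
    by_cases hl : j = il hn
    · subst hl
      rw [ew_l]
      ext1
      · rw [WW.conj_m]; simp [WW.endo, tau]
      · rw [WW.conj_k]; rfl
    by_cases h1 : j = i1 hn
    · subst h1
      rw [ew_1]
      ext1
      · rw [WW.conj_m]; simp [WW.endo, m2]
      · rw [WW.conj_k]; rfl
    rw [ew_other hn j h1 hl, _root_.map_one]; simp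
  exact DFunLike.congr_fun this x

theorem phi_mul (φ ψ : PSigmaAut n) (i : Fin n) :
    ((φ * ψ : PSigmaAut n) : MulAut (FG n)) (of i) =
      ((φ : MulAut (FG n)) (cw ψ i) * cw φ i) * of i
        * ((φ : MulAut (FG n)) (cw ψ i) * cw φ i)⁻¹ := by
  rw [Subgroup.coe_mul, MulAut.mul_apply, cw_spec ψ, _root_.map_mul, _root_.map_mul,
    _root_.map_inv, cw_spec φ]
  group

theorem tau_mul (hn : 3 ≤ n) (φ ψ : PSigmaAut n) :
    tau hn (φ * ψ) = tau hn φ + tau hn ψ := by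
  rw [tau_eq hn _ _ (phi_mul φ ψ _), _root_.map_mul, ew_phi, WW.mul_k, add_comm]
  rfl

theorem m2_mul (hn : 3 ≤ n) (φ ψ : PSigmaAut n) :
    m2 hn (φ * ψ) = m2 hn φ + T (tau hn φ) * m2 hn ψ := by
  rw [m2_eq hn _ _ (phi_mul φ ψ _), _root_.map_mul, ew_phi, WW.mul_m]
  show T (tau hn φ) * m2 hn ψ + (1 - T (ew hn (cw ψ (i1 hn))).k) * m2 hn φ
    + T (ew hn (cw ψ (i1 hn))).k * m2 hn φ = _
  ring

theorem piHom_apply_of {φ : PSigmaAut n} (hφ : φ ∈ Kn n) (x : FG n) :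
    projHom n ((φ : MulAut (FG n)) x) = projHom n x := by
  have h : piHom n φ = 1 := hφ
  have h2 : desc n (φ : MulAut (FG n)) (projHom n x) = projHom n x := by
    have := congrArg (fun ψ : PSigmaAut (n - 1) => (ψ : MulAut (FG (n - 1))) (projHom n x)) h
    exact this
  rw [← desc_proj φ.2, h2]

theorem mem_Kn {φ : PSigmaAut n}
    (h : ∀ i : Fin n, projHom n ((φ : MulAut (FG n)) (of i)) = projHom n (of i)) : φ ∈ Kn n := by
  show piHom n φ = 1
  have : desc n (φ : MulAut (FG n)) = MonoidHom.id _ := by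
    apply FreeGroup.ext_hom
    intro i
    have h1 := h (Fin.castLE (Nat.sub_le n 1) i)
    have h2 : projHom n (of (Fin.castLE (Nat.sub_le n 1) i)) = of i := by
      simp only [projHom, FreeGroup.lift_apply_of]
      rw [dif_pos (show ((Fin.castLE (Nat.sub_le n 1) i : Fin n) : ℕ) < n - 1 from i.isLt)]
      exact congrArg of (Fin.ext rfl)
    rw [← h2, desc_proj φ.2, h1, h2]; rfl
  refine Subtype.ext (MulEquiv.ext fun x => ?_)
  exact DFunLike.congr_fun this x

theorem m1_k (hn : 3 ≤ n) {φ : PSigmaAut n} (hφ : φ ∈ Kn n) :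
    (ew hn (cw φ (i0 hn))).k = 0 := by
  let e' : FG (n - 1) →* Multiplicative ℤ := FreeGroup.lift fun j =>
    if (j : ℕ) = 1 then Multiplicative.ofAdd 1 else 1
  have hcomp : e'.comp (projHom n) = WW.kHom.comp (ew hn) := by
    apply FreeGroup.ext_hom
    intro j
    simp only [MonoidHom.comp_apply]
    by_cases hl : j = il hn
    · subst hl
      rw [ew_l]
      simp [projHom, il, WW.kHom]
    have hj : (j : ℕ) < n - 1 := by
      have : (j : ℕ) ≠ n - 1 := fun h => hl (Fin.ext h)
      omega
    by_cases h1 : j = i1 hn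
    · subst h1
      rw [ew_1]
      simp only [projHom, FreeGroup.lift_apply_of, dif_pos hj]
      simp [e', WW.kHom, i1]
    · rw [ew_other hn j h1 hl]
      have : (j : ℕ) ≠ 1 := fun h => h1 (Fin.ext h)
      simp only [projHom, FreeGroup.lift_apply_of, dif_pos hj]
      simp [e', this]
  have h0 : projHom n (of (i0 hn)) = of (⟨0, by omega⟩ : Fin (n - 1)) := by
    have : ((i0 hn : Fin n) : ℕ) < n - 1 := by simp only [i0]; omega
    simp only [projHom, FreeGroup.lift_apply_of, dif_pos this]
    rfl
  have h := piHom_apply_of hφ (of (i0 hn))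
  rw [cw_spec, _root_.map_mul, _root_.map_mul, _root_.map_inv, h0] at h
  have h3 := conj_gen e' (⟨0, by omega⟩ : Fin (n - 1)) (by simp [e'])
    (projHom n (cw φ (i0 hn))) 1 (by rw [h]; simp)
  have h4 := DFunLike.congr_fun hcomp (cw φ (i0 hn))
  simp only [MonoidHom.comp_apply] at h4
  rw [h4, _root_.map_one] at h3
  exact h3

theorem m1_mul (hn : 3 ≤ n) (φ : PSigmaAut n) {ψ : PSigmaAut n} (hψ : ψ ∈ Kn n) :
    m1 hn (φ * ψ) = m1 hn φ + T (tau hn φ) * m1 hn ψ := by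
  rw [m1_eq hn _ _ (phi_mul φ ψ _), _root_.map_mul, ew_phi, WW.mul_m]
  show T (tau hn φ) * m1 hn ψ + (1 - T (ew hn (cw ψ (i0 hn))).k) * m2 hn φ
    + T (ew hn (cw ψ (i0 hn))).k * m1 hn φ = _
  rw [m1_k hn hψ]; simp [add_comm]

theorem m1_one (hn : 3 ≤ n) : m1 hn 1 = 0 := by
  rw [m1_eq hn 1 1 (by simp)]; simp [WW.one_m]
theorem m2_one (hn : 3 ≤ n) : m2 hn 1 = 0 := by
  rw [m2_eq hn 1 1 (by simp)]; simp [WW.one_m]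

/-- the cocycle -/
noncomputable def coc (hn : 3 ≤ n) (φ ψ : Kn n) : LR :=
  LaurentPolynomial.invert (m1 hn φ) * (T (tau hn φ) * m2 hn ψ)

theorem coc_cocycle (hn : 3 ≤ n) (x y z : Kn n) :
    coc hn (x * y) z + coc hn x y = coc hn x (y * z) + coc hn y z := by
  simp only [coc, Subgroup.coe_mul, m1_mul hn _ y.2, m2_mul, tau_mul, LaurentPolynomial.T_add,
    _root_.map_add, _root_.map_mul, LaurentPolynomial.invert_T]
  linear_combination (LaurentPolynomial.invert (m1 hn y) * T (tau hn y) * m2 hn z)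
    * TT (tau hn x)

theorem proj_l (hn : 3 ≤ n) : projHom n (of (il hn)) = 1 := by
  simp [projHom, il]

theorem c_mem (hn : 3 ≤ n) : alphaP n (i0 hn) (il hn) ∈ Kn n := by
  apply mem_Kn
  intro i
  show projHom n (alphaAut n _ _ (of i)) = _
  rw [alphaAut_apply_of n (i0l hn)]
  split_ifs with h
  · simp [proj_l, h]
  · rfl

/-- the element `x_2^k x_n x_2^{-k}` -/
def yg (hn : 3 ≤ n) (k : ℕ) : FG n := of (i1 hn) ^ k * of (il hn) * (of (i1 hn) ^ k)⁻¹

/-- inner automorphism -/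
def yP (hn : 3 ≤ n) (k : ℕ) : PSigmaAut n :=
  ⟨MulAut.conj (yg hn k), fun _ => ⟨yg hn k, rfl⟩⟩

theorem y_mem (hn : 3 ≤ n) (k : ℕ) : yP hn k ∈ Kn n := by
  apply mem_Kn
  intro i
  show projHom n (yg hn k * of i * (yg hn k)⁻¹) = _
  have : projHom n (yg hn k) = 1 := by simp [yg, proj_l]
  simp [this]

theorem ew_pow (hn : 3 ≤ n) (k : ℕ) : ew hn (of (i1 hn) ^ k) = ⟨0, k⟩ := by
  induction k with
  | zero => simp; rfl
  | succ k ih =>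
    rw [pow_succ, _root_.map_mul, ih, ew_1]
    ext1
    · simp [WW.mul_m]
    · simp [WW.mul_k]

theorem ew_yg (hn : 3 ≤ n) (k : ℕ) : ew hn (yg hn k) = ⟨T k, 0⟩ := by
  rw [yg, _root_.map_mul, _root_.map_mul, _root_.map_inv, ew_pow, ew_l]
  ext1
  · rw [WW.conj_m]; simp
  · rw [WW.conj_k]

theorem cy_comm (hn : 3 ≤ n) (k : ℕ) :
    alphaP n (i0 hn) (il hn) * yP hn k = yP hn k * alphaP n (i0 hn) (il hn) := by
  have hg : alphaAut n (i0 hn) (il hn) (yg hn k) = yg hn k := by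
    simp only [yg, _root_.map_mul, _root_.map_inv, _root_.map_pow,
      alphaAut_apply_of n (i0l hn), if_neg (i01 hn).symm, if_neg (i0l hn).symm]
  refine Subtype.ext (MulEquiv.ext fun x => ?_)
  show alphaAut n (i0 hn) (il hn) (yg hn k * x * (yg hn k)⁻¹)
    = yg hn k * alphaAut n (i0 hn) (il hn) x * (yg hn k)⁻¹
  rw [_root_.map_mul, _root_.map_mul, _root_.map_inv, hg]

theorem c_apply (hn : 3 ≤ n) (r : Fin n) :
    (alphaP n (i0 hn) (il hn) : MulAut (FG n)) (of r) =
      if r = i0 hn then of (il hn) * of (i0 hn) * (of (il hn))⁻¹ else of r :=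
  alphaAut_apply_of n (i0l hn) r

theorem coc_diff (hn : 3 ≤ n) (k : ℕ) :
    coc hn ⟨_, c_mem hn⟩ ⟨_, y_mem hn k⟩ - coc hn ⟨_, y_mem hn k⟩ ⟨_, c_mem hn⟩ = T k := by
  have a1 : m1 hn (alphaP n (i0 hn) (il hn)) = 1 := by
    rw [m1_eq hn _ (of (il hn)) (by rw [c_apply, if_pos rfl]), ew_l]
  have a2 : m2 hn (alphaP n (i0 hn) (il hn)) = 0 := by
    rw [m2_eq hn _ 1 (by rw [c_apply, if_neg (i01 hn).symm]; simp), _root_.map_one]; rfl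
  have a3 : tau hn (alphaP n (i0 hn) (il hn)) = 0 := by
    rw [tau_eq hn _ 1 (by rw [c_apply, if_neg (i0l hn).symm]; simp), _root_.map_one]; rfl
  have b2 : m2 hn (yP hn k) = T k := by
    rw [m2_eq hn _ (yg hn k) rfl, ew_yg]
  simp [coc, a1, a2, a3, b2]

end main

/-- STATEMENT 2: For every `n ≥ 3`, the group `K_n` is not finitely presentable: there is no
group isomorphism between `K_n` and a presented group on a finite generating set with a
finite set of relators. -/
theorem statement2 (n : ℕ) (hn : 3 ≤ n) :
    ¬ ∃ (α : Type) (_ : Finite α) (rels : Set (FreeGroup α)) (_ : rels.Finite),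
        Nonempty (↥(Kn n) ≃* PresentedGroup rels) := by
  rintro ⟨α, _, rels, hr, ⟨e⟩⟩
  obtain ⟨S, hS, h⟩ := fp_cocycle (coc hn)
    (fun x => by simp [coc, m1_one]) (fun x => by simp [coc, m2_one]) (coc_cocycle hn) rels hr e
  refine no_fg S hS fun k => ?_
  rw [← coc_diff hn k]
  exact h _ _ (Subtype.ext (cy_comm hn k))
end

section
/- For every n ≥ 2, the group K_n is finitely generated. -/
open FreeGroup

section words
open List

lemma aux_append {n : ℕ} (w : FG n) (c : Fin n × Bool) (h : FG n)
    (hw : FreeGroup.IsReduced (w.toWord ++ [c])) (hh : FreeGroup.IsReduced (c :: h.toWord)) :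
    (w * FreeGroup.mk [c] * h).toWord = w.toWord ++ [c] ++ h.toWord := by
  have e : w * FreeGroup.mk [c] * h = FreeGroup.mk (w.toWord ++ [c] ++ h.toWord) := by
    rw [← FreeGroup.mul_mk, ← FreeGroup.mul_mk, FreeGroup.mk_toWord, FreeGroup.mk_toWord]
  rw [e, FreeGroup.toWord_mk]
  exact (FreeGroup.IsReduced.append_overlap hw (by simpa using hh) (by simp)).reduce_eq

lemma aux_prefix {n : ℕ} (w g : FG n) (d : Fin n × Bool) (t : List (Fin n × Bool))
    (hw : FreeGroup.IsReduced (w.toWord ++ [d])) (h : (w⁻¹ * g).toWord = d :: t) :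
    w.toWord ++ [d] <+: g.toWord := by
  have e : g = FreeGroup.mk (w.toWord ++ [d] ++ t) := by
    have : w⁻¹ * g = FreeGroup.mk (d :: t) := by rw [← h, FreeGroup.mk_toWord]
    have h2 : g = w * FreeGroup.mk (d :: t) := by rw [← this]; group
    rw [h2]
    conv_lhs => rw [← FreeGroup.mk_toWord (x := w)]
    rw [FreeGroup.mul_mk]; simp
  have hr : FreeGroup.IsReduced (d :: t) := h ▸ FreeGroup.isReduced_toWord
  rw [e, FreeGroup.toWord_mk,
    (FreeGroup.IsReduced.append_overlap hw (by simpa using hr) (by simp)).reduce_eq]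
  exact ⟨t, rfl⟩

lemma aux_letter {n : ℕ} (f : FG n →* FG n) (w : Fin n → FG n)
    (hf : ∀ i, f (of i) = w i * of i * (w i)⁻¹) (i : Fin n) (e : Bool) :
    f (FreeGroup.mk [(i, e)]) = w i * FreeGroup.mk [(i, e)] * (w i)⁻¹ := by
  cases e
  · have : (FreeGroup.mk [(i, false)] : FG n) = (of i)⁻¹ := rfl
    rw [this, _root_.map_inv, hf]; group
  · exact hf i

lemma aux_main {n : ℕ} (f : FG n →* FG n) (w : Fin n → FG n)
    (hf : ∀ i, f (of i) = w i * of i * (w i)⁻¹)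
    (hA : ∀ i e, FreeGroup.IsReduced ((w i).toWord ++ [(i, e)]))
    (hB : ∀ i j e, i ≠ j → ¬ ((w j).toWord ++ [(j, e)] <+: (w i).toWord)) :
    ∀ (L : List (Fin n × Bool)) (i : Fin n) (e : Bool), FreeGroup.IsReduced ((i, e) :: L) →
      (w i).toWord ++ [(i, e)] <+: (f (FreeGroup.mk ((i, e) :: L))).toWord := by
  intro L
  have hB' : ∀ i j e e', (w j).toWord ++ [(j, e)] <+: (w i).toWord ++ [(i, e')] →
      (j, e) = (i, e') := by
    intro i j e e' h
    rcases List.prefix_concat_iff.1 h with h | h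
    · simpa using (List.append_inj' h rfl).2
    · by_cases hij : i = j
      · subst hij
        have := h.length_le
        simp at this
      · exact absurd h (hB i j e hij)
  induction L with
  | nil =>
    intro i e _
    rw [aux_letter f w hf, aux_append]
    · exact ⟨_, rfl⟩
    · exact hA i e
    · have := FreeGroup.isReduced_toWord (x := (FreeGroup.mk [(i,!e)] : FG n))
      rw [FreeGroup.toWord_inv]
      have h2 := hA i (!e)
      have h3 := FreeGroup.isReduced_iff_reduce_eq.1 h2
      rw [FreeGroup.isReduced_iff_reduce_eq]
      have h4 := FreeGroup.reduce_invRev (w := (w i).toWord ++ [(i, !e)])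
      rw [h3] at h4
      simpa [FreeGroup.invRev] using h4
  | cons c L ih =>
    intro i e hred
    obtain ⟨j, b⟩ := c
    have hm : (FreeGroup.mk ((i, e) :: (j, b) :: L) : FG n)
      = FreeGroup.mk [(i, e)] * FreeGroup.mk ((j, b) :: L) := by
      rw [FreeGroup.mul_mk]; rfl
    rw [FreeGroup.isReduced_cons_cons] at hred
    have hj := ih j b hred.2
    rw [hm, _root_.map_mul, aux_letter f w hf, mul_assoc (w i * _), aux_append]
    · exact ⟨_, rfl⟩
    · exact hA i e
    · rcases hh : ((w i)⁻¹ * f (FreeGroup.mk ((j, b) :: L))).toWord with _ | ⟨⟨k, d⟩, t⟩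
      · exact FreeGroup.IsReduced.singleton
      · rw [FreeGroup.isReduced_cons_cons]
        refine ⟨?_, hh ▸ FreeGroup.isReduced_toWord⟩
        intro hik
        simp only at hik ⊢
        subst hik
        by_contra hne
        have hp := aux_prefix _ _ _ _ (hA i d) hh
        have : (i, d) = (j, b) := by
          rcases List.prefix_or_prefix_of_prefix hp hj with h | h
          · exact hB' _ _ _ _ h
          · exact (hB' _ _ _ _ h).symm
        simp only [Prod.mk.injEq] at this
        exact hne ((hred.1 this.1).trans this.2.symm)

lemma aux_final {n : ℕ} (f : FG n →* FG n) (hs : Function.Surjective f) (w : Fin n → FG n)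
    (hf : ∀ i, f (of i) = w i * of i * (w i)⁻¹)
    (hA : ∀ i e, FreeGroup.IsReduced ((w i).toWord ++ [(i, e)]))
    (hB : ∀ i j e, i ≠ j → ¬ ((w j).toWord ++ [(j, e)] <+: (w i).toWord)) (i : Fin n) :
    w i = 1 := by
  obtain ⟨x, hx⟩ := hs (of i)
  rcases hL : x.toWord with _ | ⟨⟨j, e⟩, L⟩
  · rw [FreeGroup.toWord_eq_nil_iff] at hL
    subst hL
    rw [_root_.map_one] at hx
    exact absurd hx.symm (FreeGroup.of_ne_one i)
  · have h := aux_main f w hf hA hB L j e (hL ▸ FreeGroup.isReduced_toWord)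
    rw [← hL, FreeGroup.mk_toWord, hx, FreeGroup.toWord_of] at h
    have hl := h.length_le
    have : (w j).toWord = [] := by
      rw [← List.length_eq_zero_iff]; simp at hl; simp [hl]
    rw [this] at h
    simp at h
    rw [FreeGroup.toWord_eq_nil_iff] at this
    rw [← h.1]; exact this

end words
section gen

lemma aux_alpha_inv {n : ℕ} {i j : Fin n} (hij : i ≠ j) (r : Fin n) :
    (alphaAut n i j)⁻¹ (of r) = if r = i then (of j)⁻¹ * of i * of j else of r := by
  apply (alphaAut n i j).injective
  rw [MulAut.apply_inv_self]
  by_cases hr : r = i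
  · subst hr
    simp [alphaAut_apply_of n hij, Ne.symm hij, mul_assoc]
  · simp [alphaAut_apply_of n hij, hr]

lemma aux_alpha_signed {n : ℕ} (M : Subgroup (MulAut (FG n))) (hM : ∀ i j, alphaAut n i j ∈ M)
    {i j : Fin n} (hij : i ≠ j) (e : Bool) :
    ∃ a ∈ M, ∀ r, a (of r) =
      if r = i then (FreeGroup.mk [(j, e)])⁻¹ * of i * FreeGroup.mk [(j, e)] else of r := by
  cases e
  · refine ⟨alphaAut n i j, hM i j, fun r => ?_⟩
    rw [alphaAut_apply_of n hij]
    rfl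
  · refine ⟨(alphaAut n i j)⁻¹, M.inv_mem (hM i j), fun r => ?_⟩
    rw [aux_alpha_inv hij]
    rfl

lemma aux_autext {n : ℕ} {φ ψ : MulAut (FG n)} (h : ∀ i, φ (of i) = ψ (of i)) : φ = ψ := by
  have : (φ : FG n ≃* FG n).toMonoidHom = (ψ : FG n ≃* FG n).toMonoidHom :=
    FreeGroup.ext_hom _ _ h
  exact MulEquiv.toMonoidHom_injective this

lemma aux_sum_lt {n : ℕ} (w : Fin n → FG n) (i : Fin n) (v : FG n)
    (h : FreeGroup.norm v < FreeGroup.norm (w i)) :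
    ∑ k, FreeGroup.norm (Function.update w i v k) < ∑ k, FreeGroup.norm (w k) := by
  apply Finset.sum_lt_sum
  · intro k _
    by_cases hk : k = i
    · subst hk; simpa using h.le
    · simp [hk]
  · exact ⟨i, Finset.mem_univ _, by simpa using h⟩

lemma aux_gen {n : ℕ} (M : Subgroup (MulAut (FG n))) (hM : ∀ i j, alphaAut n i j ∈ M) :
    ∀ (N : ℕ) (φ : MulAut (FG n)) (w : Fin n → FG n),
      (∀ i, φ (of i) = w i * of i * (w i)⁻¹) → ∑ i, FreeGroup.norm (w i) = N → φ ∈ M := by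
  intro N
  induction N using Nat.strong_induction_on with
  | _ N ih =>
  intro φ w hw hN
  by_cases hA : ∀ i e, FreeGroup.IsReduced ((w i).toWord ++ [(i, e)])
  swap
  · push Not at hA
    obtain ⟨i, e, hA⟩ := hA
    rcases List.eq_nil_or_concat' (w i).toWord with h0 | ⟨u, c, hu⟩
    · rw [h0] at hA
      exact absurd FreeGroup.IsReduced.singleton hA
    · have hci : c.1 = i := by
        by_contra hne
        apply hA
        rw [hu]
        refine FreeGroup.IsReduced.append_overlap (hu ▸ FreeGroup.isReduced_toWord) ?_ (by simp)
        simp [hne]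
      have hwi : w i = FreeGroup.mk u * FreeGroup.mk [c] := by
        rw [FreeGroup.mul_mk, ← hu, FreeGroup.mk_toWord]
      have hc : (FreeGroup.mk [c] : FG n) * of i * (FreeGroup.mk [c])⁻¹ = of i := by
        obtain ⟨k, b⟩ := c
        simp only at hci
        subst hci
        cases b
        · have : (FreeGroup.mk [(k, false)] : FG n) = (of k)⁻¹ := rfl
          rw [this]; group
        · have : (FreeGroup.mk [(k, true)] : FG n) = of k := rfl
          rw [this]; group
      have hlt : FreeGroup.norm (FreeGroup.mk u) < FreeGroup.norm (w i) := by
        refine lt_of_le_of_lt FreeGroup.norm_mk_le ?_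
        rw [FreeGroup.norm, hu]; simp
      refine ih _ (hN ▸ aux_sum_lt w i _ hlt) φ (Function.update w i (FreeGroup.mk u)) ?_ rfl
      intro k
      by_cases hk : k = i
      · subst hk
        rw [hw, Function.update_self, hwi, mul_inv_rev]
        conv_rhs => rw [← hc]
        group
      · simp [hk, hw]
  by_cases hB : ∀ i j e, i ≠ j → ¬ ((w j).toWord ++ [(j, e)] <+: (w i).toWord)
  swap
  · push Not at hB
    obtain ⟨i, j, e, hij, v, hv⟩ := hB
    obtain ⟨a, haM, ha⟩ := aux_alpha_signed M hM hij e
    have hwi : w i = w j * FreeGroup.mk [(j, e)] * FreeGroup.mk v := by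
      conv_rhs => rw [← FreeGroup.mk_toWord (x := w j)]
      rw [FreeGroup.mul_mk, FreeGroup.mul_mk, hv, FreeGroup.mk_toWord]
    have hlt : FreeGroup.norm (w j * FreeGroup.mk v) < FreeGroup.norm (w i) := by
      refine lt_of_le_of_lt (FreeGroup.norm_mul_le _ _) ?_
      have h1 : FreeGroup.norm (FreeGroup.mk v) ≤ v.length := FreeGroup.norm_mk_le
      have h2 : FreeGroup.norm (w i) = FreeGroup.norm (w j) + 1 + v.length := by
        rw [FreeGroup.norm, ← hv]; simp [FreeGroup.norm]; omega
      omega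
    have key : φ * a ∈ M := by
      refine ih _ (hN ▸ aux_sum_lt w i _ hlt) (φ * a) (Function.update w i _) ?_ rfl
      intro k
      rw [MulAut.mul_apply, ha]
      by_cases hk : k = i
      · subst hk
        have hj := aux_letter (φ : FG n ≃* FG n).toMonoidHom w hw j e
        have hj' : φ (FreeGroup.mk [(j, e)]) = w j * FreeGroup.mk [(j, e)] * (w j)⁻¹ := hj
        rw [if_pos rfl, Function.update_self, _root_.map_mul, _root_.map_mul, _root_.map_inv, hj',
          hw, hwi]
        group
      · simp [hk, hw]
    have := M.mul_mem key (M.inv_mem haM)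
    simpa using this
  have h1 := aux_final (φ : FG n ≃* FG n).toMonoidHom φ.surjective w hw hA hB
  have : φ = 1 := aux_autext fun i => by rw [hw, h1]; simp
  rw [this]; exact M.one_mem

lemma aux_gen' {n : ℕ} (M : Subgroup (MulAut (FG n))) (hM : ∀ i j, alphaAut n i j ∈ M) :
    PSigmaAut n ≤ M := by
  intro φ hφ
  choose w hw using hφ
  exact aux_gen M hM _ φ w hw rfl

end gen
section rels

lemma aux_R1 {n : ℕ} {i j k l : Fin n} (hij : i ≠ j) (hkl : k ≠ l) (hik : i ≠ k) (hil : i ≠ l)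
    (hjk : j ≠ k) : Commute (alphaAut n i j) (alphaAut n k l) := by
  apply aux_autext
  intro r
  rw [MulAut.mul_apply, MulAut.mul_apply]
  by_cases hr : r = i
  · subst hr
    simp [alphaAut_apply_of n hij, alphaAut_apply_of n hkl, hik, hjk, hil.symm]
  · by_cases hr' : r = k
    · subst hr'
      simp [alphaAut_apply_of n hij, alphaAut_apply_of n hkl, hik.symm, hil.symm]
    · simp [alphaAut_apply_of n hij, alphaAut_apply_of n hkl, hr, hr']

lemma aux_R2 {n : ℕ} {i j k : Fin n} (hij : i ≠ j) (hkj : k ≠ j) (hik : i ≠ k) :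
    Commute (alphaAut n i j * alphaAut n k j) (alphaAut n i k) := by
  apply aux_autext
  intro r
  simp only [MulAut.mul_apply]
  by_cases hr : r = i
  · subst hr
    simp [alphaAut_apply_of n hij, alphaAut_apply_of n hkj, alphaAut_apply_of n hik, hik, hik.symm,
      hij.symm, hkj.symm, mul_assoc]
  · by_cases hr' : r = k
    · subst hr'
      simp [alphaAut_apply_of n hij, alphaAut_apply_of n hkj, alphaAut_apply_of n hik, hik.symm,
        hij.symm]
    · simp [alphaAut_apply_of n hij, alphaAut_apply_of n hkj, alphaAut_apply_of n hik, hr, hr']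

def hGens (n : ℕ) (l : Fin n) : Set (MulAut (FG n)) :=
  {φ | ∃ p, p ≠ l ∧ (φ = alphaAut n p l ∨ φ = alphaAut n l p)}

lemma hGens_finite (n : ℕ) (l : Fin n) : (hGens n l).Finite := by
  refine ((Set.finite_range fun p => alphaAut n p l).union
    (Set.finite_range fun p => alphaAut n l p)).subset ?_
  rintro φ ⟨p, -, h | h⟩
  · exact Or.inl ⟨p, h.symm⟩
  · exact Or.inr ⟨p, h.symm⟩

lemma aux_norm {G : Type*} [Group G] (s : Set G) (g : G)
    (h : ∀ k ∈ s, g * k * g⁻¹ ∈ Subgroup.closure s ∧ g⁻¹ * k * g ∈ Subgroup.closure s) :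
    g ∈ Subgroup.normalizer (Subgroup.closure s : Set G) := by
  have h1 : ∀ k ∈ Subgroup.closure s, g * k * g⁻¹ ∈ Subgroup.closure s := by
    have : Subgroup.closure s ≤ (Subgroup.closure s).comap (MulAut.conj g).toMonoidHom := by
      rw [Subgroup.closure_le]
      intro k hk
      simpa using (h k hk).1
    intro k hk
    simpa using this hk
  have h2 : ∀ k ∈ Subgroup.closure s, g⁻¹ * k * g ∈ Subgroup.closure s := by
    have : Subgroup.closure s ≤ (Subgroup.closure s).comap (MulAut.conj g⁻¹).toMonoidHom := by
      rw [Subgroup.closure_le]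
      intro k hk
      simpa using (h k hk).2
    intro k hk
    simpa using this hk
  rw [Subgroup.mem_normalizer_iff]
  intro k
  refine ⟨h1 k, fun hk => ?_⟩
  have := h2 _ hk
  simpa [mul_assoc] using this

lemma aux_conj {G : Type*} [Group G] (H : Subgroup G) (g h x : G) (hc : Commute g h)
    (hx : Commute (g * h) x) (hh : h ∈ H) (hxH : x ∈ H) :
    g * x * g⁻¹ ∈ H ∧ g⁻¹ * x * g ∈ H := by
  have e1 : g * x * g⁻¹ = h⁻¹ * x * h := by
    have : h * (g * x) = x * h * g := by
      rw [← mul_assoc, ← hc.eq, hx.eq, hc.eq, mul_assoc]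
    calc g * x * g⁻¹ = h⁻¹ * (h * (g * x)) * g⁻¹ := by group
      _ = h⁻¹ * x * h := by rw [this]; group
  have e2 : g⁻¹ * x * g = h * x * h⁻¹ := by
    have : x * g * h = g * h * x := by rw [hx.eq, mul_assoc]
    calc g⁻¹ * x * g = g⁻¹ * (x * g * h) * h⁻¹ := by group
      _ = h * x * h⁻¹ := by rw [this]; group
  rw [e1, e2]
  exact ⟨H.mul_mem (H.mul_mem (H.inv_mem hh) hxH) hh, H.mul_mem (H.mul_mem hh hxH) (H.inv_mem hh)⟩

lemma aux_normalizes {n : ℕ} {l i j : Fin n} (hi : i ≠ l) (hj : j ≠ l) (hij : i ≠ j) :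
    alphaAut n i j ∈
      Subgroup.normalizer (Subgroup.closure (hGens n l) : Set (MulAut (FG n))) := by
  apply aux_norm
  have m1 : ∀ p, p ≠ l → alphaAut n p l ∈ Subgroup.closure (hGens n l) :=
    fun p hp => Subgroup.subset_closure ⟨p, hp, Or.inl rfl⟩
  have m2 : ∀ p, p ≠ l → alphaAut n l p ∈ Subgroup.closure (hGens n l) :=
    fun p hp => Subgroup.subset_closure ⟨p, hp, Or.inr rfl⟩
  have comm : ∀ k ∈ Subgroup.closure (hGens n l), Commute (alphaAut n i j) k →
      alphaAut n i j * k * (alphaAut n i j)⁻¹ ∈ Subgroup.closure (hGens n l) ∧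
      (alphaAut n i j)⁻¹ * k * alphaAut n i j ∈ Subgroup.closure (hGens n l) := by
    intro k hk hc
    exact aux_conj _ _ 1 k (Commute.one_right _) (by simpa using hc) (Subgroup.one_mem _) hk
  have cil := aux_conj (Subgroup.closure (hGens n l)) (alphaAut n i j) (alphaAut n l j)
    (alphaAut n i l) (aux_R1 hij hj.symm hi hij hj) (aux_R2 hij hj.symm hi)
    (m2 j hj) (m1 i hi)
  rintro k ⟨p, hp, rfl | rfl⟩
  · by_cases hpi : p = i
    · subst hpi
      exact cil
    · by_cases hpj : p = j
      · subst hpj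
        have h2 := comm (alphaAut n i l * alphaAut n p l) (Subgroup.mul_mem _ (m1 i hi) (m1 p hp))
          (aux_R2 hi hp hij).symm
        constructor
        · have := Subgroup.mul_mem _ (Subgroup.inv_mem _ cil.1) h2.1
          convert this using 1
          group
        · have := Subgroup.mul_mem _ (Subgroup.inv_mem _ cil.2) h2.2
          convert this using 1
          group
      · exact comm _ (m1 p hp) (aux_R1 hij hp (Ne.symm hpi) hi (Ne.symm hpj))
  · by_cases hpi : p = i
    · subst hpi
      refine aux_conj _ _ (alphaAut n l j) _ (aux_R1 hij hj.symm hi hij hj) ?_ (m2 j hj) (m2 p hp)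
      have := aux_R2 (i := l) (j := j) (k := p) hj.symm hij hp.symm
      rwa [(aux_R1 hij hj.symm hi hij hj : Commute (alphaAut n p j) (alphaAut n l j)).eq]
    · exact comm _ (m2 p hp) (aux_R1 hij hp.symm hi (Ne.symm hpi) hj)

end rels
section fin

lemma aux_mem_K {n : ℕ} (φ : MulAut (FG n)) :
    φ ∈ (Kn n).map (PSigmaAut n).subtype ↔ φ ∈ PSigmaAut n ∧ desc n φ = MonoidHom.id _ := by
  constructor
  · rintro ⟨ψ, hψ, rfl⟩
    refine ⟨ψ.2, ?_⟩
    have h1 : piHom n ψ = 1 := hψ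
    ext1 x
    have h2 : (piHom n ψ : MulAut (FG (n - 1))) (of x) = (1 : PSigmaAut (n-1)).1 (of x) := by
      rw [h1]
    exact h2
  · rintro ⟨hφ, h⟩
    refine ⟨⟨φ, hφ⟩, ?_, rfl⟩
    show piHom n ⟨φ, hφ⟩ = 1
    refine Subtype.ext (MulEquiv.ext fun x => ?_)
    exact DFunLike.congr_fun h x

lemma aux_desc_of {n : ℕ} (φ : MulAut (FG n)) (r : Fin (n - 1)) :
    desc n φ (of r) = projHom n (φ (of (Fin.castLE (Nat.sub_le n 1) r))) := by
  simp [desc, castHom]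

lemma aux_proj_cast {n : ℕ} (x : FG (n - 1)) : projHom n (castHom n x) = x :=
  DFunLike.congr_fun (desc_one n) x

lemma aux_proj_of {n : ℕ} (r : Fin (n - 1)) :
    projHom n (of (Fin.castLE (Nat.sub_le n 1) r)) = of r := by
  have := aux_proj_cast (n := n) (of r)
  simpa [castHom] using this

lemma aux_H_le {n : ℕ} (l : Fin n) (hl : (l : ℕ) = n - 1) :
    Subgroup.closure (hGens n l) ≤ (Kn n).map (PSigmaAut n).subtype := by
  have hpl : projHom n (of l) = 1 := by simp [projHom, hl]
  have hne : ∀ r : Fin (n - 1), Fin.castLE (Nat.sub_le n 1) r ≠ l := by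
    intro r h
    have := congrArg Fin.val h
    have h2 := r.2
    simp at this
    omega
  rw [Subgroup.closure_le]
  rintro φ ⟨p, hp, rfl | rfl⟩ <;> refine (aux_mem_K _).2 ⟨alphaAut_mem _ _ _, ?_⟩ <;>
    refine FreeGroup.ext_hom _ _ fun r => ?_
  · rw [aux_desc_of, alphaAut_apply_of n hp]
    by_cases hr : Fin.castLE (Nat.sub_le n 1) r = p
    · simp [hr, hpl]
      rw [← hr, aux_proj_of]
    · simp [hr, aux_proj_of]
  · rw [aux_desc_of, alphaAut_apply_of n hp.symm, if_neg (hne r), aux_proj_of]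
    rfl

def sGens (n : ℕ) (l : Fin n) : Set (MulAut (FG n)) :=
  {φ | ∃ i j, i ≠ l ∧ j ≠ l ∧ i ≠ j ∧ φ = alphaAut n i j}

lemma aux_S {n : ℕ} (l : Fin n) (hl : (l : ℕ) = n - 1) (s : MulAut (FG n))
    (hs : s ∈ Subgroup.closure (sGens n l)) :
    s (of l) = of l ∧ ∃ t : MulAut (FG (n - 1)), ∀ x, s (castHom n x) = castHom n (t x) := by
  induction hs using Subgroup.closure_induction with
  | mem s hs =>
    obtain ⟨i, j, hi, hj, hij, rfl⟩ := hs
    refine ⟨by rw [alphaAut_apply_of n hij, if_neg hi.symm], ?_⟩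
    have hex : ∀ i : Fin n, i ≠ l → ∃ i' : Fin (n - 1), Fin.castLE (Nat.sub_le n 1) i' = i := by
      intro i hi
      have : (i : ℕ) ≠ l := fun h => hi (Fin.ext h)
      exact ⟨⟨i, by omega⟩, rfl⟩
    obtain ⟨i', rfl⟩ := hex i hi
    obtain ⟨j', rfl⟩ := hex j hj
    have hij' : i' ≠ j' := fun h => hij (by rw [h])
    refine ⟨alphaAut (n - 1) i' j', fun x => ?_⟩
    have : (alphaAut n (Fin.castLE (Nat.sub_le n 1) i')
        (Fin.castLE (Nat.sub_le n 1) j') : FG n ≃* FG n).toMonoidHom.comp (castHom n) =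
        (castHom n).comp (alphaAut (n - 1) i' j' : FG (n - 1) ≃* FG (n - 1)).toMonoidHom := by
      refine FreeGroup.ext_hom _ _ fun r => ?_
      show alphaAut n _ _ (castHom n (of r)) = castHom n (alphaAut (n - 1) i' j' (of r))
      rw [alphaAut_apply_of (n - 1) hij']
      by_cases hr : r = i'
      · subst hr
        simp [castHom, alphaAut_apply_of n hij]
      · have : Fin.castLE (Nat.sub_le n 1) r ≠ Fin.castLE (Nat.sub_le n 1) i' := by
          simpa using hr
        simp [castHom, alphaAut_apply_of n hij, hr]
    exact DFunLike.congr_fun this x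
  | one => exact ⟨rfl, 1, fun x => rfl⟩
  | mul a b _ _ ha hb =>
    obtain ⟨ha, t, ht⟩ := ha
    obtain ⟨hb, u, hu⟩ := hb
    refine ⟨by rw [MulAut.mul_apply, hb, ha], t * u, fun x => ?_⟩
    rw [MulAut.mul_apply, hu, ht, MulAut.mul_apply]
  | inv a _ ha =>
    obtain ⟨ha, t, ht⟩ := ha
    refine ⟨?_, t⁻¹, fun x => ?_⟩
    · apply a.injective
      rw [MulAut.apply_inv_self, ha]
    · apply a.injective
      rw [MulAut.apply_inv_self, ht, MulAut.apply_inv_self]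

lemma aux_S_trivial {n : ℕ} (l : Fin n) (hl : (l : ℕ) = n - 1) (s : MulAut (FG n))
    (hs : s ∈ Subgroup.closure (sGens n l)) (hd : desc n s = MonoidHom.id _) : s = 1 := by
  obtain ⟨h1, t, ht⟩ := aux_S l hl s hs
  apply aux_autext
  intro i
  by_cases hi : i = l
  · rw [hi, h1]; rfl
  · have hv : (i : ℕ) ≠ l := fun h => hi (Fin.ext h)
    have hlt : (i : ℕ) < n - 1 := by omega
    have e : (of i : FG n) = castHom n (of ⟨i, hlt⟩) := by simp [castHom]
    have h2 : t (of ⟨i, hlt⟩) = of ⟨i, hlt⟩ := by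
      have : projHom n (s (castHom n (of ⟨i, hlt⟩))) = of ⟨i, hlt⟩ :=
        DFunLike.congr_fun hd (of (⟨i, hlt⟩ : Fin (n - 1)))
      rwa [ht, aux_proj_cast] at this
    rw [e, ht, h2]; rfl

lemma aux_K_eq {n : ℕ} (l : Fin n) (hl : (l : ℕ) = n - 1) :
    (Kn n).map (PSigmaAut n).subtype = Subgroup.closure (hGens n l) := by
  refine le_antisymm ?_ (aux_H_le l hl)
  intro φ hφ
  have hφ' := (aux_mem_K φ).1 hφ
  have hnorm : Subgroup.closure (sGens n l) ≤
      Subgroup.normalizer (Subgroup.closure (hGens n l) : Set (MulAut (FG n))) := by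
    rw [Subgroup.closure_le]
    rintro _ ⟨i, j, hi, hj, hij, rfl⟩
    exact aux_normalizes hi hj hij
  have hmem : φ ∈ Subgroup.closure (hGens n l) ⊔ Subgroup.closure (sGens n l) := by
    refine aux_gen' _ ?_ hφ'.1
    intro i j
    by_cases hij : i = j
    · simp [alphaAut, hij, Subgroup.one_mem]
    by_cases hi : i = l
    · subst hi
      exact (le_sup_left : _ ≤ _ ⊔ Subgroup.closure (sGens n i))
        (Subgroup.subset_closure ⟨j, Ne.symm hij, Or.inr rfl⟩)
    by_cases hj : j = l
    · subst hj
      exact (le_sup_left : _ ≤ _ ⊔ Subgroup.closure (sGens n j))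
        (Subgroup.subset_closure ⟨i, hij, Or.inl rfl⟩)
    · exact (le_sup_right : _ ≤ Subgroup.closure (hGens n l) ⊔ _)
        (Subgroup.subset_closure ⟨i, j, hi, hj, hij, rfl⟩)
  have hmem' : φ ∈ ((Subgroup.closure (hGens n l) ⊔ Subgroup.closure (sGens n l) :
    Subgroup (MulAut (FG n))) : Set (MulAut (FG n))) := hmem
  rw [Subgroup.coe_mul_of_right_le_normalizer_left _ _ hnorm] at hmem'
  obtain ⟨h, hh, s, hs, rfl⟩ := hmem'
  have hsK : s ∈ (Kn n).map (PSigmaAut n).subtype := by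
    have := Subgroup.mul_mem _ (Subgroup.inv_mem _ (aux_H_le l hl hh)) hφ
    simpa using this
  have : s = 1 := aux_S_trivial l hl s hs ((aux_mem_K s).1 hsK).2
  subst this
  simpa using hh

end fin

/-- STATEMENT 3: For every `n ≥ 2`, the group `K_n` is finitely generated. -/
theorem statement3 (n : ℕ) (hn : 2 ≤ n) : Group.FG ↥(Kn n) := by
  have h := aux_K_eq (n := n) ⟨n - 1, by omega⟩ rfl
  have hfg : ((Kn n).map (PSigmaAut n).subtype).FG := by
    rw [h, Subgroup.fg_iff]
    exact ⟨_, rfl, hGens_finite n _⟩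
  have : Group.FG ↥((Kn n).map (PSigmaAut n).subtype) := (Group.fg_iff_subgroup_fg _).2 hfg
  exact Group.fg_of_surjective (f := ((Kn n).equivMapOfInjective _
    (PSigmaAut n).subtype_injective).symm.toMonoidHom) (MulEquiv.surjective _)
end

section
/- For every n ≥ 2 there exists a group homomorphism r : K_n → ℤ^{n−1} with r(α_{in}) = e_i for each 1 ≤ i ≤ n−1 (where e_i is the i-th standard basis vector); consequently the composition of the homomorphism ℤ^{n−1} → K_n, e_i ↦ α_{in}, with r is the identity on ℤ^{n−1}. -/
open FreeGroup

/-- The exponent sum of `x_j`. -/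
def expo {n : ℕ} (j : Fin n) : FG n →* Multiplicative ℤ :=
  FreeGroup.lift fun k => if k = j then Multiplicative.ofAdd 1 else 1

/-- The shear of `ℤ × ℤ`. -/
def shearP : Equiv.Perm (ℤ × ℤ) where
  toFun z := (z.1 + z.2, z.2)
  invFun z := (z.1 - z.2, z.2)
  left_inv z := by simp
  right_inv z := by simp

/-- The vertical translation of `ℤ × ℤ`. -/
def transP : Equiv.Perm (ℤ × ℤ) where
  toFun z := (z.1, z.2 + 1)
  invFun z := (z.1, z.2 - 1)
  left_inv z := by simp
  right_inv z := by simp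

/-- An affine action of `F_n` on `ℤ × ℤ`. -/
def affAct {n : ℕ} (i j : Fin n) : FG n →* Equiv.Perm (ℤ × ℤ) :=
  FreeGroup.lift fun k => if k = j then shearP else if k = i then transP else 1

lemma affAct_add {n : ℕ} (i j : Fin n) (w : FG n) : ∀ z : ℤ × ℤ, ∀ a b : ℤ,
    affAct i j w (z.1 + a, z.2 + b) =
      ((affAct i j w z).1 + a + Multiplicative.toAdd (expo j w) * b, (affAct i j w z).2 + b) := by
  induction w using FreeGroup.induction_on with
  | C1 => intro z a b; simp
  | of k =>
    intro z a b
    simp only [affAct, expo, FreeGroup.lift_apply_of]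
    split_ifs <;> ext <;> simp [shearP, transP] <;> ring
  | inv_of k _ =>
    intro z a b
    simp only [affAct, expo, FreeGroup.lift_apply_of, _root_.map_inv]
    split_ifs <;> ext <;> simp [shearP, transP, Equiv.Perm.inv_def, Equiv.symm] <;> ring
  | mul x y hx hy =>
    intro z a b
    simp only [_root_.map_mul, Equiv.Perm.mul_apply, hy]
    have := hx (affAct i j y z) (a + Multiplicative.toAdd (expo j y) * b) b
    rw [← add_assoc] at this
    rw [this]
    ext <;> simp
    ring

/-- The exponent of `x_j` in the conjugator of `x_i`. -/
def conjExp {n : ℕ} (i j : Fin n) (φ : MulAut (FG n)) : ℤ := (affAct i j (φ (of i)) (0, 0)).1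

lemma conjExp_eq {n : ℕ} {i j : Fin n} (hij : i ≠ j) {φ : MulAut (FG n)} {w : FG n}
    (h : φ (of i) = w * of i * w⁻¹) : conjExp i j φ = Multiplicative.toAdd (expo j w) := by
  have hz : affAct i j w ((affAct i j w)⁻¹ (0, 0)) = (0, 0) := by simp
  have := affAct_add i j w ((affAct i j w)⁻¹ (0, 0)) 0 1
  rw [hz] at this
  have ht : affAct i j (of i) = transP := by simp [affAct, hij]
  rw [conjExp, h, _root_.map_mul, _root_.map_mul, _root_.map_inv, ht, Equiv.Perm.mul_apply,
    Equiv.Perm.mul_apply]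
  have h2 : transP ((affAct i j w)⁻¹ (0, 0)) =
      (((affAct i j w)⁻¹ (0, 0)).1 + 0, ((affAct i j w)⁻¹ (0, 0)).2 + 1) := by
    simp [transP]
  rw [h2, this]
  simp

lemma expo_aut {n : ℕ} (j : Fin n) {φ : MulAut (FG n)} (hφ : φ ∈ PSigmaAut n) (w : FG n) :
    expo j (φ w) = expo j w := by
  have : (expo j).comp (φ : FG n ≃* FG n).toMonoidHom = expo j := by
    apply FreeGroup.ext_hom
    intro k
    obtain ⟨v, hv⟩ := hφ k
    simp [hv]
  exact DFunLike.congr_fun this w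

lemma conjExp_mul {n : ℕ} {i j : Fin n} (hij : i ≠ j) (φ ψ : PSigmaAut n) :
    conjExp i j ((φ * ψ : PSigmaAut n) : MulAut (FG n)) =
      conjExp i j (φ : MulAut (FG n)) + conjExp i j (ψ : MulAut (FG n)) := by
  obtain ⟨v, hv⟩ := φ.2 i
  obtain ⟨w, hw⟩ := ψ.2 i
  have h : ((φ * ψ : PSigmaAut n) : MulAut (FG n)) (of i) =
      (φ.1 w * v) * of i * (φ.1 w * v)⁻¹ := by
    simp only [Subgroup.coe_mul, MulAut.mul_apply, hw, _root_.map_mul, _root_.map_inv, hv,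
      mul_inv_rev, mul_assoc]
  rw [conjExp_eq hij h, conjExp_eq hij hv, conjExp_eq hij hw, _root_.map_mul, expo_aut j φ.2,
    toAdd_mul, add_comm]

/-- STATEMENT 9: For every `n ≥ 2` there is a group homomorphism `r : K_n → ℤ^{n-1}` with
`r(α_{in}) = e_i` for each `1 ≤ i ≤ n - 1`; consequently the composition of the
homomorphism `ℤ^{n-1} → K_n`, `e_i ↦ α_{in}`, with `r` is the identity on `ℤ^{n-1}`. -/
theorem statement9 (n : ℕ) (hn : 2 ≤ n) :
    ∃ r : ↥(Kn n) →* Multiplicative (Fin (n - 1) → ℤ),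
      (∀ (i : Fin (n - 1)) (g : Kn n),
          (g : ↥(PSigmaAut n)) =
              alphaP n (Fin.castLE (Nat.sub_le n 1) i) ⟨n - 1, by omega⟩ →
            r g = Multiplicative.ofAdd (Pi.single i 1)) ∧
      ∀ f : Multiplicative (Fin (n - 1) → ℤ) →* ↥(Kn n),
        (∀ i : Fin (n - 1),
            ((f (Multiplicative.ofAdd (Pi.single i 1))) : ↥(PSigmaAut n)) =
              alphaP n (Fin.castLE (Nat.sub_le n 1) i) ⟨n - 1, by omega⟩) →
          r.comp f = MonoidHom.id _ := by
  have hne : ∀ i : Fin (n - 1), Fin.castLE (Nat.sub_le n 1) i ≠ (⟨n - 1, by omega⟩ : Fin n) := by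
    intro i h
    have := congrArg Fin.val h
    have := i.isLt
    simp at *
    omega
  let r : ↥(Kn n) →* Multiplicative (Fin (n - 1) → ℤ) := MonoidHom.mk'
    (fun g => Multiplicative.ofAdd fun i =>
      conjExp (Fin.castLE (Nat.sub_le n 1) i) ⟨n - 1, by omega⟩ ((g : PSigmaAut n) : MulAut (FG n)))
    (by
      intro g h
      rw [← ofAdd_add]
      congr 1
      funext i
      exact conjExp_mul (hne i) _ _)
  have hr : ∀ (i : Fin (n - 1)) (g : Kn n),
          (g : ↥(PSigmaAut n)) =
              alphaP n (Fin.castLE (Nat.sub_le n 1) i) ⟨n - 1, by omega⟩ →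
            r g = Multiplicative.ofAdd (Pi.single i 1) := by
    intro i g hg
    show Multiplicative.ofAdd _ = _
    congr 1
    funext k
    rw [hg]
    by_cases hk : k = i
    · subst hk
      rw [conjExp_eq (hne k) (w := of ⟨n - 1, by omega⟩)]
      · simp [expo]
      · simp [alphaP, alphaAut_apply_of n (hne k)]
    · rw [conjExp_eq (hne k) (w := 1)]
      · simp [hk]
      · simp [alphaP, alphaAut_apply_of n (hne i), hk]
  refine ⟨r, hr, fun f hf => ?_⟩
  apply MonoidHom.toAdditiveRight.injective
  apply AddMonoidHom.functions_ext'
  intro i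
  ext1
  exact congrArg Multiplicative.toAdd (hr i _ (hf i))
end

section
/- For every n ≥ 3 there exist group homomorphisms ι : K_{n−1} → K_n and p : K_n → K_{n−1} with p ∘ ι = id; that is, K_n admits a split homomorphism onto K_{n−1}. -/
open FreeGroup

def pP (n : ℕ) : FG (n + 1) →* FG n := projHom (n + 1)

lemma pP_castSucc (n : ℕ) (i : Fin n) : pP n (of i.castSucc) = of i := by
  have h : ((i.castSucc : Fin (n + 1)) : ℕ) < n + 1 - 1 := i.isLt
  show projHom (n + 1) (of i.castSucc) = _
  rw [projHom, FreeGroup.lift_apply_of, dif_pos h]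
  rfl

lemma pP_last (n : ℕ) : pP n (of (Fin.last n)) = 1 := by
  have h : ¬ (((Fin.last n : Fin (n + 1)) : ℕ) < n + 1 - 1) := by simp
  show projHom (n + 1) (of (Fin.last n)) = _
  rw [projHom, FreeGroup.lift_apply_of, dif_neg h]

lemma mem_Kn_iff (n : ℕ) (φ : PSigmaAut (n + 1)) :
    φ ∈ Kn (n + 1) ↔ ∀ x, pP n ((φ : MulAut (FG (n + 1))) x) = pP n x := by
  constructor
  · intro h x
    have h1 : piHom (n + 1) φ = 1 := h
    have h2 : ∀ y, desc (n + 1) φ y = y := fun y =>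
      DFunLike.congr_fun (congrArg Subtype.val h1) y
    have := desc_proj φ.2 x
    rw [h2] at this
    exact this.symm
  · intro h
    show piHom (n + 1) φ = 1
    refine Subtype.ext (MulEquiv.ext fun y => ?_)
    show desc (n + 1) φ y = y
    have h3 : desc (n + 1) 1 y = y := by rw [desc_one]; rfl
    exact (h (castHom (n + 1) y)).trans h3

def qH (n : ℕ) : FG (n + 1) →* FG n :=
  FreeGroup.lift (Fin.cases 1 fun i => of i)

def sH (n : ℕ) : FG n →* FG (n + 1) := FreeGroup.lift fun i => of i.succ

@[simp] lemma qH_zero (n : ℕ) : qH n (of 0) = 1 := by simp [qH]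
@[simp] lemma qH_succ (n : ℕ) (i : Fin n) : qH n (of i.succ) = of i := by simp [qH]
@[simp] lemma sH_of (n : ℕ) (i : Fin n) : sH n (of i) = of i.succ := by simp [sH]

@[simp] lemma qs (n : ℕ) (x : FG n) : qH n (sH n x) = x := by
  have : (qH n).comp (sH n) = MonoidHom.id _ := by
    apply FreeGroup.ext_hom
    intro i
    simp
  exact DFunLike.congr_fun this x

lemma q_pP (n : ℕ) (x : FG (n + 2)) : qH n (pP (n + 1) x) = pP n (qH (n + 1) x) := by
  have : (qH n).comp (pP (n + 1)) = (pP n).comp (qH (n + 1)) := by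
    apply FreeGroup.ext_hom
    intro i
    simp only [MonoidHom.comp_apply]
    induction i using Fin.cases with
    | zero =>
      rw [← Fin.castSucc_zero, pP_castSucc, Fin.castSucc_zero]; simp
    | succ i =>
      rw [qH_succ]
      induction i using Fin.lastCases with
      | last => rw [Fin.succ_last, pP_last, pP_last, _root_.map_one]
      | cast i => rw [← Fin.castSucc_succ, pP_castSucc, pP_castSucc, qH_succ]
  exact DFunLike.congr_fun this x

lemma s_pP (n : ℕ) (x : FG (n + 1)) : sH n (pP n x) = pP (n + 1) (sH (n + 1) x) := by
  have : (sH n).comp (pP n) = (pP (n + 1)).comp (sH (n + 1)) := by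
    apply FreeGroup.ext_hom
    intro i
    simp only [MonoidHom.comp_apply, sH_of]
    induction i using Fin.lastCases with
    | last => rw [Fin.succ_last, pP_last, pP_last, _root_.map_one]
    | cast i => rw [← Fin.castSucc_succ, pP_castSucc, pP_castSucc, sH_of]
  exact DFunLike.congr_fun this x

/-- descend along killing the first generator -/
def dn (n : ℕ) (φ : MulAut (FG (n + 1))) : FG n →* FG n :=
  (qH n).comp ((φ : FG (n + 1) ≃* FG (n + 1)).toMonoidHom.comp (sH n))

lemma dn_apply (n : ℕ) (φ : MulAut (FG (n + 1))) (x : FG n) : dn n φ x = qH n (φ (sH n x)) := rfl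

lemma dn_q {n : ℕ} {φ : MulAut (FG (n + 1))} (hφ : φ ∈ PSigmaAut (n + 1)) (x : FG (n + 1)) :
    dn n φ (qH n x) = qH n (φ x) := by
  have : (dn n φ).comp (qH n) = (qH n).comp (φ : FG (n + 1) ≃* FG (n + 1)).toMonoidHom := by
    apply FreeGroup.ext_hom
    intro i
    simp only [MonoidHom.comp_apply, dn_apply, MulEquiv.coe_toMonoidHom]
    induction i using Fin.cases with
    | zero =>
      obtain ⟨w, hw⟩ := hφ 0
      rw [hw]; simp
    | succ i => simp
  exact DFunLike.congr_fun this x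

lemma dn_mul {n : ℕ} {φ : MulAut (FG (n + 1))} (hφ : φ ∈ PSigmaAut (n + 1))
    (ψ : MulAut (FG (n + 1))) (x : FG n) : dn n (φ * ψ) x = dn n φ (dn n ψ x) := by
  rw [dn_apply n ψ, dn_q hφ]; rfl

lemma dn_one (n : ℕ) (x : FG n) : dn n 1 x = x := by simp [dn_apply]

def dnAut (n : ℕ) (φ : PSigmaAut (n + 1)) : MulAut (FG n) :=
  MonoidHom.toMulEquiv (dn n ↑φ) (dn n ↑(φ⁻¹))
    (by
      ext1 i
      rw [MonoidHom.comp_apply, ← dn_mul (φ⁻¹).2 ↑φ, ← Subgroup.coe_mul, inv_mul_cancel]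
      exact dn_one _ _)
    (by
      ext1 i
      rw [MonoidHom.comp_apply, ← dn_mul φ.2, ← Subgroup.coe_mul, mul_inv_cancel]
      exact dn_one _ _)

lemma dnAut_apply (n : ℕ) (φ : PSigmaAut (n + 1)) (x : FG n) :
    dnAut n φ x = qH n ((φ : MulAut (FG (n + 1))) (sH n x)) := rfl

def dnHom (n : ℕ) : PSigmaAut (n + 1) →* PSigmaAut n :=
  MonoidHom.mk' (fun φ => ⟨dnAut n φ, by
      intro i
      obtain ⟨w, hw⟩ := φ.2 i.succ
      exact ⟨qH n w, by rw [dnAut_apply, sH_of, hw]; simp⟩⟩)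
    (by
      intro φ ψ
      exact Subtype.ext (MulEquiv.ext fun x => dn_mul φ.2 ↑ψ x))

/-- extend by fixing the first generator -/
def up (n : ℕ) (ψ : MulAut (FG n)) : FG (n + 1) →* FG (n + 1) :=
  FreeGroup.lift (Fin.cases (of 0) fun i => sH n (ψ (of i)))

@[simp] lemma up_zero (n : ℕ) (ψ : MulAut (FG n)) : up n ψ (of 0) = of 0 := by simp [up]
@[simp] lemma up_succ (n : ℕ) (ψ : MulAut (FG n)) (i : Fin n) :
    up n ψ (of i.succ) = sH n (ψ (of i)) := by simp [up]

lemma up_s (n : ℕ) (ψ : MulAut (FG n)) (x : FG n) : up n ψ (sH n x) = sH n (ψ x) := by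
  have : (up n ψ).comp (sH n) = (sH n).comp (ψ : FG n ≃* FG n).toMonoidHom := by
    apply FreeGroup.ext_hom
    intro i
    simp
  exact DFunLike.congr_fun this x

lemma up_mul (n : ℕ) (φ ψ : MulAut (FG n)) : up n (φ * ψ) = (up n φ).comp (up n ψ) := by
  apply FreeGroup.ext_hom
  intro i
  induction i using Fin.cases with
  | zero => simp
  | succ i => simp [up_s]

lemma up_one (n : ℕ) : up n 1 = MonoidHom.id _ := by
  apply FreeGroup.ext_hom
  intro i
  induction i using Fin.cases with
  | zero => simp
  | succ i => simp

def upAut (n : ℕ) (φ : MulAut (FG n)) : MulAut (FG (n + 1)) :=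
  MonoidHom.toMulEquiv (up n φ) (up n φ⁻¹)
    (by rw [← up_mul, inv_mul_cancel, up_one])
    (by rw [← up_mul, mul_inv_cancel, up_one])

lemma upAut_apply (n : ℕ) (φ : MulAut (FG n)) (x : FG (n + 1)) : upAut n φ x = up n φ x := rfl

def upHom (n : ℕ) : PSigmaAut n →* PSigmaAut (n + 1) :=
  MonoidHom.mk' (fun φ => ⟨upAut n φ, by
      intro i
      rw [upAut_apply]
      induction i using Fin.cases with
      | zero => exact ⟨1, by simp⟩
      | succ i =>
        obtain ⟨w, hw⟩ := φ.2 i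
        exact ⟨sH n w, by rw [up_succ, hw]; simp⟩⟩)
    (by
      intro φ ψ
      exact Subtype.ext (MulEquiv.ext fun x => DFunLike.congr_fun (up_mul n φ ψ) x))

lemma dnHom_mem (n : ℕ) (φ : PSigmaAut (n + 2)) (h : φ ∈ Kn (n + 2)) :
    dnHom (n + 1) φ ∈ Kn (n + 1) := by
  rw [mem_Kn_iff] at h ⊢
  intro x
  show pP n (qH (n + 1) ((φ : MulAut (FG (n + 2))) (sH (n + 1) x))) = _
  rw [← q_pP, h, q_pP, qs]

lemma upHom_mem (n : ℕ) (φ : PSigmaAut (n + 1)) (h : φ ∈ Kn (n + 1)) :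
    upHom (n + 1) φ ∈ Kn (n + 2) := by
  rw [mem_Kn_iff] at h ⊢
  intro x
  show pP (n + 1) (up (n + 1) φ x) = _
  have : (pP (n + 1)).comp (up (n + 1) φ) = pP (n + 1) := by
    apply FreeGroup.ext_hom
    intro i
    rw [MonoidHom.comp_apply]
    induction i using Fin.cases with
    | zero => rw [up_zero]
    | succ i => rw [up_succ, ← s_pP, h, s_pP, sH_of]
  exact DFunLike.congr_fun this x

lemma split_aux (n : ℕ) :
    ∃ (ι : ↥(Kn (n + 1)) →* ↥(Kn (n + 2))) (p : ↥(Kn (n + 2)) →* ↥(Kn (n + 1))),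
      p.comp ι = MonoidHom.id _ := by
  refine ⟨((upHom (n + 1)).comp (Kn (n + 1)).subtype).codRestrict _ fun x => upHom_mem n x.1 x.2,
    ((dnHom (n + 1)).comp (Kn (n + 2)).subtype).codRestrict _ fun x => dnHom_mem n x.1 x.2, ?_⟩
  refine MonoidHom.ext fun φ => Subtype.ext (Subtype.ext (MulEquiv.ext fun x => ?_))
  show qH (n + 1) (up (n + 1) φ (sH (n + 1) x)) = _
  rw [up_s, qs]
  rfl

/-- STATEMENT 12: For every `n ≥ 3` there are group homomorphisms `ι : K_{n-1} → K_n` and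
`p : K_n → K_{n-1}` with `p ∘ ι = id`; that is, `K_n` admits a split homomorphism onto
`K_{n-1}`. -/
theorem statement12 (n : ℕ) (hn : 3 ≤ n) :
    ∃ (ι : ↥(Kn (n - 1)) →* ↥(Kn n)) (p : ↥(Kn n) →* ↥(Kn (n - 1))),
      p.comp ι = MonoidHom.id _ := by
  obtain ⟨k, rfl⟩ : ∃ k, n = k + 2 := ⟨n - 2, by omega⟩
  exact split_aux k
end

section
/- In Aut(F_n), for distinct indices i, j ∈ {1,…,n−1} the following identities hold: α_{ji}⁻¹ α_{in} α_{ji} = α_{ni} α_{jn}⁻¹ α_{ni}⁻¹ α_{in} α_{jn} and α_{ji} α_{in} α_{ji}⁻¹ = α_{jn} α_{in} α_{ni}⁻¹ α_{jn}⁻¹ α_{ni}. -/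
open FreeGroup

lemma alphaAut_inv_apply_of (n : ℕ) {i j : Fin n} (hij : i ≠ j) (r : Fin n) :
    (MulEquiv.symm (alphaAut n i j)) (of r) = if r = i then (of j)⁻¹ * of i * of j else of r := by
  simp only [alphaAut, dif_neg hij]
  show alphaInvHom n i j (of r) = _
  simp [alphaInvHom]

lemma mulAut_ext_of {n : ℕ} {φ ψ : MulAut (FG n)} (h : ∀ r, φ (of r) = ψ (of r)) : φ = ψ := by
  have : (φ : FG n ≃* FG n).toMonoidHom = (ψ : FG n ≃* FG n).toMonoidHom :=
    FreeGroup.ext_hom _ _ h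
  exact MulEquiv.ext fun x => DFunLike.congr_fun this x

lemma alpha_rel (n : ℕ) {I J N : Fin n} (h1 : I ≠ J) (h2 : I ≠ N) (h3 : J ≠ N) :
    (alphaAut n J I)⁻¹ * alphaAut n I N * alphaAut n J I =
        alphaAut n N I * (alphaAut n J N)⁻¹ * (alphaAut n N I)⁻¹ *
          alphaAut n I N * alphaAut n J N ∧
    alphaAut n J I * alphaAut n I N * (alphaAut n J I)⁻¹ =
        alphaAut n J N * alphaAut n I N * (alphaAut n N I)⁻¹ *
          (alphaAut n J N)⁻¹ * alphaAut n N I := by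
  constructor <;>
  · apply mulAut_ext_of
    intro r
    by_cases hI : r = I
    · subst hI
      simp [MulAut.mul_apply, alphaAut_apply_of, alphaAut_inv_apply_of, h1, h2, h3, h1.symm,
        h2.symm, h3.symm, mul_assoc]
    by_cases hJ : r = J
    · subst hJ
      simp [MulAut.mul_apply, alphaAut_apply_of, alphaAut_inv_apply_of, h1, h2, h3, h1.symm,
        h2.symm, h3.symm, mul_assoc]
    by_cases hN : r = N
    · subst hN
      simp [MulAut.mul_apply, alphaAut_apply_of, alphaAut_inv_apply_of, h1, h2, h3, h1.symm,
        h2.symm, h3.symm, mul_assoc]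
    simp [MulAut.mul_apply, alphaAut_apply_of, alphaAut_inv_apply_of, h1, h2, h3, h1.symm,
        h2.symm, h3.symm, hI, hJ, hN]

/-- STATEMENT 16: In `Aut(F_n)`, for distinct `i, j ∈ {1,…,n-1}`:
`α_{ji}⁻¹ α_{in} α_{ji} = α_{ni} α_{jn}⁻¹ α_{ni}⁻¹ α_{in} α_{jn}` and
`α_{ji} α_{in} α_{ji}⁻¹ = α_{jn} α_{in} α_{ni}⁻¹ α_{jn}⁻¹ α_{ni}`. -/
theorem statement16 (n : ℕ) (hn : 2 ≤ n) (i j : Fin (n - 1)) (hij : i ≠ j) :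
    let I : Fin n := Fin.castLE (Nat.sub_le n 1) i
    let J : Fin n := Fin.castLE (Nat.sub_le n 1) j
    let N : Fin n := ⟨n - 1, by omega⟩
    (alphaAut n J I)⁻¹ * alphaAut n I N * alphaAut n J I =
        alphaAut n N I * (alphaAut n J N)⁻¹ * (alphaAut n N I)⁻¹ *
          alphaAut n I N * alphaAut n J N ∧
    alphaAut n J I * alphaAut n I N * (alphaAut n J I)⁻¹ =
        alphaAut n J N * alphaAut n I N * (alphaAut n N I)⁻¹ *
          (alphaAut n J N)⁻¹ * alphaAut n N I := by
  intro I J N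
  apply alpha_rel
  · intro h
    exact hij (Fin.castLE_injective _ h)
  · intro h
    have := congrArg Fin.val h
    simp [I, N] at this
    omega
  · intro h
    have := congrArg Fin.val h
    simp [J, N] at this
    omega
end
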